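/- Let V_1, …, V_d be pairwise disjoint sets of vertices whose union is V, and let p be an influence probability function with p u v = 0 unless u and v lie in the same part V_j. Then the influence spread decomposes across parts: for every S ⊆ V, σ(S, p) = Σ_{j=1}^{d} σ(S ∩ V_j, p). (Claim (c) in the proof of Lemma 4.1 of the paper.) -/

import Mathlib

open scoped Classical

/-- Weight of a live-edge set `L` under influence probability function `p`:
the product over all ordered pairs `(u,v)` with `u ≠ v` of `p u v` if the
edge is live and `1 - p u v` otherwise. -/
noncomputable def edgeWeight {V : Type*} [Fintype V] [DecidableEq V]
    (p : V → V → ℝ) (L : Finset (V × V)) : ℝ :=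
  ∏ e ∈ (Finset.univ : Finset V).offDiag, (if e ∈ L then p e.1 e.2 else 1 - p e.1 e.2)

/-- The set of vertices reachable from some vertex of `S` via edges of the
live-edge set `L` (reflexive–transitive closure). -/
noncomputable def reachSet {V : Type*} [Fintype V] [DecidableEq V]
    (S : Finset V) (L : Finset (V × V)) : Finset V :=
  Finset.univ.filter (fun x => ∃ s ∈ S, Relation.ReflTransGen (fun a b => (a, b) ∈ L) s x)

/-- Influence spread `σ(S, p)`: the sum over all live-edge sets `L`
(subsets of the off-diagonal pairs) of `w(p,L) * |R(S,L)|`. -/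
noncomputable def infSpread {V : Type*} [Fintype V] [DecidableEq V]
    (S : Finset V) (p : V → V → ℝ) : ℝ :=
  ∑ L ∈ ((Finset.univ : Finset V).offDiag).powerset, edgeWeight p L * (reachSet S L).card

/-- Marginal influence `MI(v | S, p) = σ(S ∪ {v}, p) − σ(S, p)`. -/
noncomputable def marginInf {V : Type*} [Fintype V] [DecidableEq V]
    (v : V) (S : Finset V) (p : V → V → ℝ) : ℝ :=
  infSpread (insert v S) p - infSpread S p

/-!
For a live-edge set of nonzero weight every live edge has nonzero probability, hence stays inside
one part. The parts are then closed under reachability, so the reachable set of `S` is the disjoint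
union of those of the pieces `S ∩ V_j`. The identity therefore holds term by term in the sum over
live-edge sets.
-/

theorem mem_of_mem_common_part {α ι : Type*} {parts : ι → Finset α}
    (hdisj : Pairwise (Function.onFun Disjoint parts)) {i : ι} {u v : α} (hu : u ∈ parts i)
    (huv : ∃ j, u ∈ parts j ∧ v ∈ parts j) : v ∈ parts i := by
  obtain ⟨j, huj, hvj⟩ := huv
  obtain rfl : i = j := hdisj.eq (Finset.not_disjoint_iff.mpr ⟨u, hu, huj⟩)
  exact hvj

section

variable {V ι : Type*} [Fintype V] [DecidableEq V] {s : Finset ι} {A parts : ι → Finset V}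
  {S T : Finset V} {L : Finset (V × V)} {p : V → V → ℝ} {u v x : V}

theorem mem_reachSet :
    x ∈ reachSet S L ↔ ∃ a ∈ S, Relation.ReflTransGen (fun a b => (a, b) ∈ L) a x := by
  simp [reachSet]

theorem reachSet_biUnion (s : Finset ι) (A : ι → Finset V) (L : Finset (V × V)) :
    reachSet (s.biUnion A) L = s.biUnion fun i => reachSet (A i) L := by
  ext x
  simp only [mem_reachSet, Finset.mem_biUnion]
  tauto

theorem reachSet_subset_of_closed (hST : S ⊆ T)
    (hclosed : ∀ u v, (u, v) ∈ L → u ∈ T → v ∈ T) : reachSet S L ⊆ T := by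
  intro x hx
  obtain ⟨a, haS, hax⟩ := mem_reachSet.mp hx
  induction hax with
  | refl => exact hST haS
  | tail hab hbc ih => exact hclosed _ _ hbc (ih (mem_reachSet.mpr ⟨a, haS, hab⟩))

theorem card_reachSet_biUnion (hdisj : (s : Set ι).PairwiseDisjoint parts)
    (hA : ∀ i ∈ s, A i ⊆ parts i)
    (hclosed : ∀ i ∈ s, ∀ u v, (u, v) ∈ L → u ∈ parts i → v ∈ parts i) :
    (reachSet (s.biUnion A) L).card = ∑ i ∈ s, (reachSet (A i) L).card := by
  rw [reachSet_biUnion]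
  exact Finset.card_biUnion <| hdisj.mono_on fun i hi =>
    reachSet_subset_of_closed (hA i hi) (hclosed i hi)

theorem ne_zero_of_edgeWeight_ne_zero (hw : edgeWeight p L ≠ 0) (huv : (u, v) ∈ L)
    (hne : u ≠ v) : p u v ≠ 0 := by
  simpa [huv] using Finset.prod_ne_zero_iff.mp hw (u, v) (by simpa using hne)

theorem infSpread_biUnion (hdisj : (s : Set ι).PairwiseDisjoint parts)
    (hA : ∀ i ∈ s, A i ⊆ parts i)
    (hclosed : ∀ i ∈ s, ∀ u v, p u v ≠ 0 → u ∈ parts i → v ∈ parts i) :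
    infSpread (s.biUnion A) p = ∑ i ∈ s, infSpread (A i) p := by
  unfold infSpread
  rw [Finset.sum_comm]
  refine Finset.sum_congr rfl fun L hL => ?_
  rw [← Finset.mul_sum]
  obtain hw | hw := eq_or_ne (edgeWeight p L) 0
  · simp only [hw, zero_mul]
  · have hlive : ∀ u v, (u, v) ∈ L → p u v ≠ 0 := fun u v huv =>
      ne_zero_of_edgeWeight_ne_zero hw huv
        (Finset.mem_offDiag.mp (Finset.mem_powerset.mp hL huv)).2.2
    rw [card_reachSet_biUnion hdisj hA fun i hi u v huv => hclosed i hi u v (hlive u v huv),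
      Nat.cast_sum]

theorem infSpread_partition_general (hdisj : (s : Set ι).PairwiseDisjoint parts)
    (hcover : S ⊆ s.biUnion parts)
    (hclosed : ∀ i ∈ s, ∀ u v, p u v ≠ 0 → u ∈ parts i → v ∈ parts i) :
    infSpread S p = ∑ i ∈ s, infSpread (S ∩ parts i) p := by
  rw [← infSpread_biUnion hdisj (fun _ _ => Finset.inter_subset_right) hclosed,
    ← Finset.inter_biUnion, Finset.inter_eq_left.mpr hcover]

end

/-- If the influence probability function respects a partition of the vertices,
then the influence spread decomposes across the parts. -/
theorem infSpread_partition {V : Type*} [Fintype V] [DecidableEq V] {d : ℕ}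
    (parts : Fin d → Finset V)
    (hdisj : ∀ i j, i ≠ j → Disjoint (parts i) (parts j))
    (hcover : ∀ x : V, ∃ i, x ∈ parts i)
    (p : V → V → ℝ)
    (hp1 : ∀ u v, 0 ≤ p u v ∧ p u v ≤ 1) (hp2 : ∀ v, p v v = 0)
    (hsep : ∀ u v, p u v ≠ 0 → ∃ j, u ∈ parts j ∧ v ∈ parts j) :
    ∀ S : Finset V, infSpread S p = ∑ j, infSpread (S ∩ parts j) p := by
  intro S
  exact infSpread_partition_general (fun i _ j _ => hdisj i j)
    (fun x _ => by simpa using hcover x)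
    fun _ _ u v huv hu => mem_of_mem_common_part hdisj hu (hsep u v huv)
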